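/- Let d ≥ 2 and let V be a K-linear subspace of P with P_d^0 ⊆ V ⊆ P_d^1 such that σ_g(V) ⊆ V for every g ∈ SL₂(K). Then V is equal to one of the four subspaces P_d^0, U_d, W_d, P_d^1. -/

import Mathlib

open MvPolynomial

/-- Variables of the differential polynomial ring `P = K{x,y}`: the variable `(0, n)`
represents `x^{(n)}` and `(1, n)` represents `y^{(n)}`. -/
abbrev PVar : Type := Fin 2 × ℕ

/-- The differential polynomial ring `P = K{x,y}`. -/
abbrev DiffPolyP (K : Type) [CommRing K] : Type := MvPolynomial PVar K

/-- `D : P → P` is the unique derivation extending the derivation `δ` of `K` and shifting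
variables, i.e. `D(x^{(n)}) = x^{(n+1)}` and `D(y^{(n)}) = y^{(n+1)}`. -/
def IsDiffStructureP {K : Type} [CommRing K] (δ : K → K)
    (D : DiffPolyP K → DiffPolyP K) : Prop :=
  (∀ a b : K, δ (a + b) = δ a + δ b) ∧
  (∀ a b : K, δ (a * b) = δ a * b + a * δ b) ∧
  (∀ f g : DiffPolyP K, D (f + g) = D f + D g) ∧
  (∀ f g : DiffPolyP K, D (f * g) = D f * g + f * D g) ∧
  (∀ a : K, D (C a) = C (δ a)) ∧
  (∀ v : PVar, D (X v) = X (v.1, v.2 + 1))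

/-- The weight of a monomial (given by its exponents `m`):
`wt(∏ (x^{(p)})^{m_p} · ∏ (y^{(q)})^{n_q}) = Σ p·m_p + Σ q·n_q`. -/
def wdeg (m : PVar →₀ ℕ) : ℕ := m.sum fun v k => v.2 * k

/-- The weight of a differential polynomial: the maximum weight of a monomial occurring
in it (with nonzero coefficient); `wt 0 = 0`. -/
noncomputable def wt {K : Type} [CommRing K] (f : DiffPolyP K) : ℕ := f.support.sup wdeg

/-- `d(h) = Σ_p m_p − Σ_q n_q` for a monomial with exponents `m`. -/
def dExp (m : PVar →₀ ℕ) : ℤ := m.sum fun v k => if v.1 = 0 then (k : ℤ) else -(k : ℤ)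

/-- `τ_b : P → P`, the unique `K`-algebra homomorphism with `τ_b(x^{(p)}) = D^p(b·x)` and
`τ_b(y^{(q)}) = D^q(b⁻¹·y)` (the action of the diagonal torus element `diag(b, b⁻¹)`). -/
noncomputable def tauP {K : Type} [Field K] (D : DiffPolyP K → DiffPolyP K) (b : K) :
    DiffPolyP K →ₐ[K] DiffPolyP K :=
  aeval fun v : PVar =>
    D^[v.2] (C (if v.1 = 0 then b else b⁻¹) * X (v.1, (0 : ℕ)))

/-- `σ_g : P → P` for `g = [[a, b], [c, e]]`: the unique `K`-algebra homomorphism with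
`σ_g(x^{(p)}) = D^p(a·x + c·y)` and `σ_g(y^{(q)}) = D^q(b·x + e·y)`. -/
noncomputable def sigmaP {K : Type} [Field K] (D : DiffPolyP K → DiffPolyP K)
    (a b c e : K) : DiffPolyP K →ₐ[K] DiffPolyP K :=
  aeval fun v : PVar =>
    D^[v.2] (if v.1 = 0
      then C a * X ((0 : Fin 2), (0 : ℕ)) + C c * X ((1 : Fin 2), (0 : ℕ))
      else C b * X ((0 : Fin 2), (0 : ℕ)) + C e * X ((1 : Fin 2), (0 : ℕ)))

/-- The Wronskian `x'y − xy'`. -/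
noncomputable def wronsk (K : Type) [Field K] : DiffPolyP K :=
  X ((0 : Fin 2), (1 : ℕ)) * X ((1 : Fin 2), (0 : ℕ))
    - X ((0 : Fin 2), (0 : ℕ)) * X ((1 : Fin 2), (1 : ℕ))

/-- `P_m^0 = span_K {x^m, x^{m−1}y, …, y^m}`. -/
noncomputable def P0 (K : Type) [Field K] (m : ℕ) : Submodule K (DiffPolyP K) :=
  Submodule.span K {f : DiffPolyP K | ∃ i : ℕ, i ≤ m ∧
    f = X ((0 : Fin 2), (0 : ℕ)) ^ i * X ((1 : Fin 2), (0 : ℕ)) ^ (m - i)}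

/-- `P_d^1`: the `K`-span of all monomials of degree `d` and weight at most `1`. -/
noncomputable def P1 (K : Type) [Field K] (d : ℕ) : Submodule K (DiffPolyP K) :=
  Submodule.span K {f : DiffPolyP K | ∃ m : PVar →₀ ℕ,
    (m.sum fun _ k => k) = d ∧ wdeg m ≤ 1 ∧ f = monomial m (1 : K)}

/-- `U_d = span_K {x^i y^{d−i}, D(x^i y^{d−i}) : 0 ≤ i ≤ d}`. -/
noncomputable def Ud (K : Type) [Field K] (D : DiffPolyP K → DiffPolyP K) (d : ℕ) :
    Submodule K (DiffPolyP K) :=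
  Submodule.span K {f : DiffPolyP K | ∃ i : ℕ, i ≤ d ∧
    (f = X ((0 : Fin 2), (0 : ℕ)) ^ i * X ((1 : Fin 2), (0 : ℕ)) ^ (d - i) ∨
     f = D (X ((0 : Fin 2), (0 : ℕ)) ^ i * X ((1 : Fin 2), (0 : ℕ)) ^ (d - i)))}

/-- `W_d = P_d^0 + (x'y − xy')·P_{d−2}^0`. -/
noncomputable def Wd (K : Type) [Field K] (d : ℕ) : Submodule K (DiffPolyP K) :=
  P0 K d ⊔ Submodule.map (LinearMap.mulLeft K (wronsk K)) (P0 K (d - 2))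

/-!
Let `D₀` be the `K`-linear derivation shifting the variables and `w = x'y - xy'`. The identities
`(i + j + 1) x' x^i y^j = D₀(x^(i+1) y^j) + j w x^i y^(j-1)`, and their mirror images for `y'`, give
`P_d^1 = P_d^0 + D₀ P_d^0 + w P_{d-2}^0`. The two elementary unipotent matrices have constant
entries, so they commute with `D₀` and fix `w`: the last two summands are images of the spaces of
binary forms of degrees `d` and `d - 2`.

In characteristic zero the binary forms of a given degree `m` are irreducible under the two
unipotents: powers of `σ - 1` reduce a nonzero form to a multiple of `y^m`, and the orbit of `y^m`
under the other unipotent spans by interpolation. The two degrees are separated by `(σ - 1)^d`,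
which kills forms of degree `d - 2` but not `x^d`. Hence a stable subspace containing an element
`D₀ q + w r` with `q ≠ 0` contains `D₀ P_d^0`, and the modular law leaves four possibilities.
-/

section Modular

variable {α : Type*} [Lattice α] [OrderBot α] [IsModularLattice α]

theorem eq_bot_or_eq_or_eq_or_eq_sup {a b v : α} (hv : v ≤ a ⊔ b)
    (ha : v ≤ b ∨ a ≤ v) (hb : v ⊓ b = ⊥ ∨ b ≤ v) :
    v = ⊥ ∨ v = a ∨ v = b ∨ v = a ⊔ b := by
  rcases ha with hvb | hav
  · rcases hb with hdisj | hbv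
    · exact .inl (by rwa [inf_eq_left.2 hvb] at hdisj)
    · exact .inr (.inr (.inl (le_antisymm hvb hbv)))
  · have hsplit : v = a ⊔ b ⊓ v := by rw [← sup_inf_assoc_of_le b hav, inf_eq_right.2 hv]
    rcases hb with hdisj | hbv
    · exact .inr (.inl (by rwa [inf_comm b, hdisj, sup_bot_eq] at hsplit))
    · exact .inr (.inr (.inr (by rwa [inf_eq_left.2 hbv] at hsplit)))

theorem eq_or_eq_sup_of_le_sup_sup {p a b v : α} (hp : p ≤ v) (hv : v ≤ p ⊔ (a ⊔ b))
    (ha : v ⊓ (a ⊔ b) ≤ b ∨ a ≤ v) (hb : v ⊓ b = ⊥ ∨ b ≤ v) :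
    v = p ∨ v = p ⊔ a ∨ v = p ⊔ b ∨ v = p ⊔ (a ⊔ b) := by
  have hsplit : v = p ⊔ v ⊓ (a ⊔ b) := by
    rw [inf_comm, ← sup_inf_assoc_of_le _ hp, inf_eq_right.2 hv]
  have hmid := eq_bot_or_eq_or_eq_or_eq_sup (v := v ⊓ (a ⊔ b)) inf_le_right
    (ha.imp_right fun h => le_inf h le_sup_left)
    (hb.imp (fun h => by rw [inf_assoc, inf_eq_right.2 (le_sup_right : b ≤ a ⊔ b), h])
      fun h => le_inf h le_sup_right)
  rcases hmid with h | h | h | h <;> rw [h] at hsplit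
  · exact .inl (by rwa [sup_bot_eq] at hsplit)
  · exact .inr (.inl hsplit)
  · exact .inr (.inr (.inl hsplit))
  · exact .inr (.inr (.inr hsplit))

end Modular

section Linear

variable {K M : Type*} [AddCommGroup M]

theorem mem_of_forall_sum_natCast_pow_smul_mem [Field K] [CharZero K] [Module K M]
    {V : Submodule K M} {m : ℕ}
    {c : ℕ → M} (h : ∀ n : ℕ, ∑ i ∈ Finset.range m, (n : K) ^ i • c i ∈ V) {i : ℕ} (hi : i < m) :
    c i ∈ V := by
  by_contra hci
  obtain ⟨φ, hφi, hφ⟩ := V.exists_le_ker_of_notMem hci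
  let p : Polynomial K := ∑ j ∈ Finset.range m, Polynomial.monomial j (φ (c j))
  have hroot (n : ℕ) : p.IsRoot (n : K) := by
    have hn : φ (∑ j ∈ Finset.range m, (n : K) ^ j • c j) = 0 := hφ (h n)
    simpa [p, Polynomial.eval_finsetSum, mul_comm] using hn
  have hp : p = 0 := p.eq_zero_of_infinite_isRoot <|
    (Set.infinite_range_of_injective Nat.cast_injective).mono (Set.range_subset_iff.2 hroot)
  have hcoeff : p.coeff i = φ (c i) := by
    simp [p, Polynomial.finsetSum_coeff, Polynomial.coeff_monomial, hi]
  exact hφi (by rw [← hcoeff, hp, Polynomial.coeff_zero])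

variable [CommRing K] [Module K M]

theorem comap_mem_invtSubmodule_of_commute {φ s : Module.End K M} (hφ : Commute φ s)
    {V : Submodule K M} (hV : V ∈ s.invtSubmodule) : V.comap φ ∈ s.invtSubmodule := by
  intro f hf
  have hcomm : φ (s f) = s (φ f) := LinearMap.congr_fun hφ f
  simpa only [Submodule.mem_comap, hcomm] using hV hf

theorem map_mem_invtSubmodule_of_commute {φ s : Module.End K M} (hφ : Commute φ s)
    {V : Submodule K M} (hV : V ∈ s.invtSubmodule) : V.map φ ∈ s.invtSubmodule := by
  rintro _ ⟨f, hf, rfl⟩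
  exact ⟨s f, hV hf, LinearMap.congr_fun hφ f⟩

end Linear

section BinaryForms

variable {K A : Type*} [CommRing K] [CommRing A] [Algebra K A]

/-- The binary forms of degree `m` in two elements `x`, `y` of a `K`-algebra, i.e. the span of the
`x ^ i * y ^ (m - i)`. For algebraically independent `x`, `y` this is `Sym^m (K²)`. -/
def binaryForms (K : Type*) {A : Type*} [CommRing K] [CommRing A] [Algebra K A] (x y : A) (m : ℕ) :
    Submodule K A :=
  Submodule.span K {f | ∃ i ≤ m, f = x ^ i * y ^ (m - i)}

/-- The endomorphism `σ` acts on the pair `x`, `y` as an elementary unipotent matrix. -/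
structure IsTransvection (σ : A →ₐ[K] A) (x y : A) : Prop where
  map_left : σ x = x + y
  map_right : σ y = y

/-- The difference operator `σ - 1`, which lowers the `x`-degree of binary forms in `x`, `y`
when `σ` is a transvection. -/
def differenceOp (σ : A →ₐ[K] A) : Module.End K A := σ.toLinearMap - 1

theorem differenceOp_apply (σ : A →ₐ[K] A) (f : A) : differenceOp σ f = σ f - f := rfl

theorem mem_invtSubmodule_differenceOp_pow {σ : A →ₐ[K] A} {V : Submodule K A}
    (hV : V ∈ Module.End.invtSubmodule σ.toLinearMap) (n : ℕ) :
    V ∈ (differenceOp σ ^ n).invtSubmodule := by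
  have hN : Set.MapsTo (differenceOp σ) V V := fun f hf => V.sub_mem (hV hf) hf
  rw [Module.End.mem_invtSubmodule_iff_mapsTo, Module.End.coe_pow]
  exact hN.iterate n

theorem commute_differenceOp_pow {σ : A →ₐ[K] A} {φ : Module.End K A}
    (hφ : Commute φ σ.toLinearMap) (n : ℕ) : Commute φ (differenceOp σ ^ n) :=
  (hφ.sub_right (Commute.one_right φ)).pow_right n

variable {x y : A} {m : ℕ}

theorem pow_mul_pow_mem_binaryForms {i j : ℕ} (h : i + j = m) :
    x ^ i * y ^ j ∈ binaryForms K x y m :=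
  Submodule.subset_span ⟨i, by omega, by rw [← h, Nat.add_sub_cancel_left]⟩

theorem left_pow_mem_binaryForms (m : ℕ) : x ^ m ∈ binaryForms K x y m := by
  simpa using pow_mul_pow_mem_binaryForms (K := K) (x := x) (y := y) (Nat.add_zero m)

theorem binaryForms_comm (x y : A) (m : ℕ) : binaryForms K x y m = binaryForms K y x m := by
  have hle (x y : A) : binaryForms K x y m ≤ binaryForms K y x m := by
    refine Submodule.span_le.2 ?_
    rintro _ ⟨i, hi, rfl⟩
    rw [mul_comm]
    exact pow_mul_pow_mem_binaryForms (by omega)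
  exact le_antisymm (hle x y) (hle y x)

theorem exists_eq_sum_of_mem_binaryForms {f : A} (hf : f ∈ binaryForms K x y m) :
    ∃ c : ℕ → K, f = ∑ i ∈ Finset.range (m + 1), c i • (x ^ i * y ^ (m - i)) := by
  have himage : {f : A | ∃ i ≤ m, f = x ^ i * y ^ (m - i)} =
      (fun i => x ^ i * y ^ (m - i)) '' (Finset.range (m + 1) : Set ℕ) := by
    ext f
    simp [eq_comm]
  rw [binaryForms, himage, Submodule.mem_span_image_finset_iff_exists_fun'] at hf
  exact hf.imp fun c hc => hc.symm

namespace IsTransvection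

variable {σ τ : A →ₐ[K] A}

theorem binaryForms_mem_invtSubmodule (h : IsTransvection σ x y) (m : ℕ) :
    binaryForms K x y m ∈ Module.End.invtSubmodule σ.toLinearMap := by
  refine Submodule.span_le.2 ?_
  rintro _ ⟨i, hi, rfl⟩
  have hexpand : σ (x ^ i * y ^ (m - i)) =
      ∑ j ∈ Finset.range (i + 1), i.choose j • (x ^ j * y ^ (i - j + (m - i))) := by
    simp only [map_mul, map_pow, h.map_left, h.map_right, add_pow, Finset.sum_mul, nsmul_eq_mul,
      pow_add]
    exact Finset.sum_congr rfl fun j _ => by ring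
  change σ (x ^ i * y ^ (m - i)) ∈ binaryForms K x y m
  rw [hexpand]
  refine Submodule.sum_mem _ fun j hj => nsmul_mem (pow_mul_pow_mem_binaryForms ?_) _
  have := Finset.mem_range.1 hj
  omega

theorem differenceOp_pow_succ_left_mul (h : IsTransvection σ x y) (n : ℕ) (f : A) :
    (differenceOp σ ^ (n + 1)) (x * f) =
      x * (differenceOp σ ^ (n + 1)) f + (n + 1) • (y * σ ((differenceOp σ ^ n) f)) := by
  induction n with
  | zero =>
    simp only [zero_add, pow_one, pow_zero, one_smul, Module.End.one_apply, differenceOp_apply,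
      map_mul, h.map_left]
    ring
  | succ n ih =>
    have hsucc (k : ℕ) (g : A) : (differenceOp σ ^ (k + 1)) g =
        differenceOp σ ((differenceOp σ ^ k) g) := by rw [pow_succ', Module.End.mul_apply]
    rw [hsucc (n + 1) (x * f), ih, hsucc (n + 1) f, hsucc n f]
    simp only [differenceOp_apply, map_add, map_sub, map_mul, map_natCast, h.map_left, h.map_right,
      nsmul_eq_mul]
    push_cast
    ring

theorem differenceOp_pow_eq_zero (h : IsTransvection σ x y) {i n : ℕ} (hin : i < n) (j : ℕ) :
    (differenceOp σ ^ n) (x ^ i * y ^ j) = 0 := by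
  obtain ⟨n, rfl⟩ := Nat.exists_eq_add_one_of_ne_zero (Nat.ne_zero_of_lt hin)
  induction i generalizing n with
  | zero => simp [pow_succ, Module.End.mul_apply, differenceOp_apply, h.map_right]
  | succ i ih =>
    obtain ⟨n, rfl⟩ := Nat.exists_eq_add_one_of_ne_zero (show n ≠ 0 by omega)
    rw [pow_succ' x, mul_assoc, h.differenceOp_pow_succ_left_mul, ih (n + 1) (by omega),
      ih n (by omega)]
    simp

theorem differenceOp_pow_self (h : IsTransvection σ x y) (i j : ℕ) :
    (differenceOp σ ^ i) (x ^ i * y ^ j) = i.factorial • y ^ (i + j) := by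
  induction i with
  | zero => simp
  | succ i ih =>
    rw [pow_succ' x, mul_assoc, h.differenceOp_pow_succ_left_mul,
      h.differenceOp_pow_eq_zero (Nat.lt_succ_self i), ih, map_nsmul, map_pow, h.map_right,
      Nat.factorial_succ, mul_smul, mul_zero, zero_add, mul_smul_comm, ← pow_succ',
      Nat.add_right_comm]

theorem differenceOp_pow_eq_zero_of_mem (h : IsTransvection σ x y) {n : ℕ} (hmn : m < n) {f : A}
    (hf : f ∈ binaryForms K x y m) : (differenceOp σ ^ n) f = 0 := by
  have hle : binaryForms K x y m ≤ LinearMap.ker (differenceOp σ ^ n) := by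
    refine Submodule.span_le.2 ?_
    rintro _ ⟨i, hi, rfl⟩
    exact h.differenceOp_pow_eq_zero (by omega) _
  exact hle hf

theorem pow_left_pow_apply (h : IsTransvection σ x y) (n m : ℕ) :
    (σ.toLinearMap ^ n) (x ^ m) = ∑ i ∈ Finset.range (m + 1),
      (n : K) ^ i • m.choose i • (y ^ i * x ^ (m - i)) := by
  have hiter : (σ.toLinearMap ^ n) (x ^ m) = (n • y + x) ^ m := by
    induction n with
    | zero => simp
    | succ n ih =>
      rw [pow_succ', Module.End.mul_apply, ih, AlgHom.toLinearMap_apply, map_pow, map_add,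
        map_nsmul, h.map_left, h.map_right, add_nsmul, one_nsmul, add_comm x y, add_assoc]
  rw [hiter, add_pow]
  refine Finset.sum_congr rfl fun i _ => ?_
  rw [← Nat.cast_smul_eq_nsmul K, ← Nat.cast_smul_eq_nsmul K]
  simp only [Algebra.smul_def, map_pow, map_natCast]
  ring

end IsTransvection

end BinaryForms

section Irreducibility

variable {K A : Type*} [Field K] [CharZero K] [CommRing A] [Algebra K A]
variable {x y : A} {m : ℕ} {σ τ : A →ₐ[K] A} {V : Submodule K A}

namespace IsTransvection

theorem right_pow_mem (h : IsTransvection σ x y)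
    (hV : V ∈ Module.End.invtSubmodule σ.toLinearMap) {f : A} (hf : f ∈ binaryForms K x y m)
    (hfV : f ∈ V) (hf₀ : f ≠ 0) : y ^ m ∈ V := by
  obtain ⟨c, rfl⟩ := exists_eq_sum_of_mem_binaryForms hf
  suffices hlead : ∀ k ≤ m + 1, ∑ i ∈ Finset.range k, c i • (x ^ i * y ^ (m - i)) ∈ V →
      ∑ i ∈ Finset.range k, c i • (x ^ i * y ^ (m - i)) ≠ 0 → y ^ m ∈ V from
    hlead (m + 1) le_rfl hfV hf₀
  intro k hk hkV hk₀
  induction k with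
  | zero => simp at hk₀
  | succ k ih =>
    by_cases hck : c k = 0
    · simp only [Finset.sum_range_succ, hck, zero_smul, add_zero] at hkV hk₀
      exact ih (by omega) hkV hk₀
    · have hlow : ∑ i ∈ Finset.range k, (differenceOp σ ^ k) (c i • (x ^ i * y ^ (m - i))) = 0 :=
        Finset.sum_eq_zero fun i hi => by
          rw [map_smul, h.differenceOp_pow_eq_zero (Finset.mem_range.1 hi), smul_zero]
      have htop : (differenceOp σ ^ k) (∑ i ∈ Finset.range (k + 1), c i • (x ^ i * y ^ (m - i))) =
          (c k * k.factorial) • y ^ m := by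
        rw [Finset.sum_range_succ, map_add, map_sum, hlow, zero_add, map_smul,
          h.differenceOp_pow_self, Nat.add_sub_of_le (by omega), mul_smul, Nat.cast_smul_eq_nsmul]
      have hmem := mem_invtSubmodule_differenceOp_pow hV k hkV
      rw [Submodule.mem_comap, htop] at hmem
      exact (V.smul_mem_iff (mul_ne_zero hck (Nat.cast_ne_zero.2 k.factorial_ne_zero))).1 hmem

theorem binaryForms_le_of_left_pow_mem (h : IsTransvection σ x y)
    (hV : V ∈ Module.End.invtSubmodule σ.toLinearMap) (hx : x ^ m ∈ V) :
    binaryForms K x y m ≤ V := by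
  have horbit (n : ℕ) : ∑ i ∈ Finset.range (m + 1),
      (n : K) ^ i • m.choose i • (y ^ i * x ^ (m - i)) ∈ V := by
    rw [← h.pow_left_pow_apply, Module.End.coe_pow]
    exact Set.MapsTo.iterate hV n hx
  rw [binaryForms_comm]
  refine Submodule.span_le.2 ?_
  rintro _ ⟨i, hi, rfl⟩
  have hi_mem := mem_of_forall_sum_natCast_pow_smul_mem horbit (Nat.lt_succ_of_le hi)
  rw [← Nat.cast_smul_eq_nsmul K] at hi_mem
  exact (V.smul_mem_iff (Nat.cast_ne_zero.2 (Nat.choose_pos hi).ne')).1 hi_mem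

theorem binaryForms_le_of_mem (hσ : IsTransvection σ x y) (hτ : IsTransvection τ y x)
    (hσV : V ∈ Module.End.invtSubmodule σ.toLinearMap)
    (hτV : V ∈ Module.End.invtSubmodule τ.toLinearMap) {f : A} (hf : f ∈ binaryForms K x y m)
    (hfV : f ∈ V) (hf₀ : f ≠ 0) : binaryForms K x y m ≤ V := by
  rw [binaryForms_comm]
  exact hτ.binaryForms_le_of_left_pow_mem hτV (hσ.right_pow_mem hσV hf hfV hf₀)

theorem map_binaryForms_le_of_mem (hσ : IsTransvection σ x y) (hτ : IsTransvection τ y x)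
    (hσV : V ∈ Module.End.invtSubmodule σ.toLinearMap)
    (hτV : V ∈ Module.End.invtSubmodule τ.toLinearMap) {φ : Module.End K A}
    (hφσ : Commute φ σ.toLinearMap) (hφτ : Commute φ τ.toLinearMap) {f : A}
    (hf : f ∈ binaryForms K x y m) (hfV : φ f ∈ V) (hf₀ : f ≠ 0) :
    (binaryForms K x y m).map φ ≤ V :=
  Submodule.map_le_iff_le_comap.2 <|
    hσ.binaryForms_le_of_mem hτ (comap_mem_invtSubmodule_of_commute hφσ hσV)
      (comap_mem_invtSubmodule_of_commute hφτ hτV) hf hfV hf₀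

-- `(σ - 1) ^ m` kills the forms of degree `n < m` but maps `x ^ m` to `m! • y ^ m`.
theorem map_right_pow_mem_of_map_left_pow_add_mem (h : IsTransvection σ x y)
    (hV : V ∈ Module.End.invtSubmodule σ.toLinearMap) {φ ψ : Module.End K A}
    (hφ : Commute φ σ.toLinearMap) (hψ : Commute ψ σ.toLinearMap) {n : ℕ} (hnm : n < m) {r : A}
    (hr : r ∈ binaryForms K x y n) (hV_mem : φ (x ^ m) + ψ r ∈ V) : φ (y ^ m) ∈ V := by
  have hcomm {χ : Module.End K A} (hχ : Commute χ σ.toLinearMap) (f : A) :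
      (differenceOp σ ^ m) (χ f) = χ ((differenceOp σ ^ m) f) :=
    (LinearMap.congr_fun (commute_differenceOp_pow hχ m) f).symm
  have hxm : (differenceOp σ ^ m) (x ^ m) = m.factorial • y ^ m := by
    simpa using h.differenceOp_pow_self m 0
  have hdiff : (differenceOp σ ^ m) (φ (x ^ m) + ψ r) = (m.factorial : K) • φ (y ^ m) := by
    rw [map_add, hcomm hφ, hcomm hψ, hxm, h.differenceOp_pow_eq_zero_of_mem hnm hr, map_zero,
      add_zero, map_nsmul, Nat.cast_smul_eq_nsmul]
  rw [← V.smul_mem_iff (Nat.cast_ne_zero (R := K).2 m.factorial_ne_zero), ← hdiff]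
  exact mem_invtSubmodule_differenceOp_pow hV m hV_mem

theorem map_binaryForms_le_of_add_mem (hσ : IsTransvection σ x y) (hτ : IsTransvection τ y x)
    (hσV : V ∈ Module.End.invtSubmodule σ.toLinearMap)
    (hτV : V ∈ Module.End.invtSubmodule τ.toLinearMap) {φ ψ : Module.End K A}
    (hφσ : Commute φ σ.toLinearMap) (hφτ : Commute φ τ.toLinearMap)
    (hψσ : Commute ψ σ.toLinearMap) (hψτ : Commute ψ τ.toLinearMap) (hy : y ^ m ≠ 0)
    {n : ℕ} (hnm : n < m) {q r : A} (hq : q ∈ binaryForms K x y m) (hr : r ∈ binaryForms K x y n)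
    (hqr : φ q + ψ r ∈ V) (hq₀ : q ≠ 0) : (binaryForms K x y m).map φ ≤ V := by
  let T : Submodule K A := (binaryForms K x y n).map ψ
  have hσT : T ∈ Module.End.invtSubmodule σ.toLinearMap :=
    map_mem_invtSubmodule_of_commute hψσ (hσ.binaryForms_mem_invtSubmodule n)
  have hτT : T ∈ Module.End.invtSubmodule τ.toLinearMap :=
    map_mem_invtSubmodule_of_commute hψτ
      (binaryForms_comm (K := K) x y n ▸ hτ.binaryForms_mem_invtSubmodule n)
  have hqVT : φ q ∈ V ⊔ T :=
    Submodule.mem_sup.2 ⟨_, hqr, _, T.neg_mem ⟨r, hr, rfl⟩, add_neg_cancel_right _ _⟩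
  have hle : (binaryForms K x y m).map φ ≤ V ⊔ T :=
    hσ.map_binaryForms_le_of_mem hτ (Module.End.invtSubmodule.sup_mem hσV hσT)
      (Module.End.invtSubmodule.sup_mem hτV hτT) hφσ hφτ hq hqVT hq₀
  obtain ⟨v, hv, _, ⟨s, hs, rfl⟩, hvs⟩ := Submodule.mem_sup.1
    (hle (Submodule.mem_map_of_mem (left_pow_mem_binaryForms m)))
  have hyV : φ (y ^ m) ∈ V :=
    hσ.map_right_pow_mem_of_map_left_pow_add_mem hσV hφσ hψσ hnm (Submodule.neg_mem _ hs)
      (by rwa [← hvs, map_neg, add_neg_cancel_right])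
  exact hσ.map_binaryForms_le_of_mem hτ hσV hτV hφσ hφτ
    (binaryForms_comm (K := K) y x m ▸ left_pow_mem_binaryForms m) hyV hy

theorem eq_or_eq_sup_of_le_sup_map_binaryForms (hσ : IsTransvection σ x y)
    (hτ : IsTransvection τ y x) (hσV : V ∈ Module.End.invtSubmodule σ.toLinearMap)
    (hτV : V ∈ Module.End.invtSubmodule τ.toLinearMap) {φ ψ : Module.End K A}
    (hφσ : Commute φ σ.toLinearMap) (hφτ : Commute φ τ.toLinearMap)
    (hψσ : Commute ψ σ.toLinearMap) (hψτ : Commute ψ τ.toLinearMap) (hy : y ^ m ≠ 0)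
    {n : ℕ} (hnm : n < m) {P : Submodule K A} (hP : P ≤ V)
    (hV : V ≤ P ⊔ ((binaryForms K x y m).map φ ⊔ (binaryForms K x y n).map ψ)) :
    V = P ∨ V = P ⊔ (binaryForms K x y m).map φ ∨ V = P ⊔ (binaryForms K x y n).map ψ ∨
      V = P ⊔ ((binaryForms K x y m).map φ ⊔ (binaryForms K x y n).map ψ) := by
  refine eq_or_eq_sup_of_le_sup_sup hP hV (or_iff_not_imp_right.2 fun hφV => ?_)
    (or_iff_not_imp_right.2 fun hψV => ?_)
  · rintro _ ⟨hfV, hf⟩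
    obtain ⟨_, ⟨q, hq, rfl⟩, _, ⟨r, hr, rfl⟩, rfl⟩ := Submodule.mem_sup.1 hf
    have hq₀ : q = 0 := of_not_not fun hq₀ => hφV <|
      hσ.map_binaryForms_le_of_add_mem hτ hσV hτV hφσ hφτ hψσ hψτ hy hnm hq hr hfV hq₀
    rw [hq₀, map_zero, zero_add]
    exact ⟨r, hr, rfl⟩
  · rw [Submodule.eq_bot_iff]
    rintro _ ⟨hfV, r, hr, rfl⟩
    have hr₀ : r = 0 := of_not_not fun hr₀ => hψV <|
      hσ.map_binaryForms_le_of_mem hτ hσV hτV hψσ hψτ hr hfV hr₀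
    rw [hr₀, map_zero]

end IsTransvection

end Irreducibility

section Wronskian

variable {K A : Type*} [CommRing K] [CommRing A] [Algebra K A]

/-- The Wronskian `x' * y - x * y'` of two elements of a `K`-algebra with a derivation. -/
def wronskian (D : Derivation K A A) (x y : A) : A := D x * y - x * D y

theorem mulLeft_wronskian_swap (D : Derivation K A A) (x y : A) :
    LinearMap.mulLeft K (wronskian D y x) = -LinearMap.mulLeft K (wronskian D x y) := by
  ext f
  simp only [wronskian, LinearMap.neg_apply, LinearMap.mulLeft_apply]
  ring

theorem IsTransvection.commute_mulLeft_wronskian {σ : A →ₐ[K] A} {x y : A}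
    (h : IsTransvection σ x y) {D : Derivation K A A} (hσ : Commute D.toLinearMap σ.toLinearMap) :
    Commute (LinearMap.mulLeft K (wronskian D x y)) σ.toLinearMap := by
  have hcomm (f : A) : σ (D f) = D (σ f) := (LinearMap.congr_fun hσ f).symm
  have hfix : σ (wronskian D x y) = wronskian D x y := by
    simp only [wronskian, map_sub, map_mul, hcomm, h.map_left, h.map_right, map_add]
    ring
  ext f
  simp [hfix]

theorem IsTransvection.commute_mulLeft_wronskian_swap {σ : A →ₐ[K] A} {x y : A}
    (h : IsTransvection σ y x) {D : Derivation K A A} (hσ : Commute D.toLinearMap σ.toLinearMap) :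
    Commute (LinearMap.mulLeft K (wronskian D x y)) σ.toLinearMap := by
  rw [mulLeft_wronskian_swap]
  exact (h.commute_mulLeft_wronskian hσ).neg_left

theorem succ_nsmul_deriv_mul_pow_mul_pow (D : Derivation K A A) (x y : A) (i j : ℕ) :
    (i + j + 1) • (D x * (x ^ i * y ^ j)) =
      D (x ^ (i + 1) * y ^ j) + wronskian D x y * j • (x ^ i * y ^ (j - 1)) := by
  cases j with
  | zero =>
    simp only [pow_zero, mul_one, zero_nsmul, mul_zero, add_zero, Derivation.leibniz_pow,
      Nat.add_sub_cancel, smul_eq_mul, mul_comm (D x)]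
  | succ j =>
    simp only [Derivation.leibniz, Derivation.leibniz_pow, smul_eq_mul, nsmul_eq_mul, wronskian,
      Nat.add_sub_cancel]
    push_cast
    ring

end Wronskian

section DerivMul

variable {K A : Type*} [Field K] [CharZero K] [CommRing A] [Algebra K A]
variable (D : Derivation K A A) (x y : A) (m : ℕ)

theorem map_mulLeft_deriv_left_le_sup :
    (binaryForms K x y m).map (LinearMap.mulLeft K (D x)) ≤
      (binaryForms K x y (m + 1)).map D.toLinearMap ⊔
        (binaryForms K x y (m - 1)).map (LinearMap.mulLeft K (wronskian D x y)) := by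
  refine (Submodule.map_span_le _ _ _).2 ?_
  rintro _ ⟨i, hi, rfl⟩
  have hwronskian : (m - i) • (x ^ i * y ^ (m - i - 1)) ∈ binaryForms K x y (m - 1) := by
    obtain hzero | hpos := Nat.eq_zero_or_pos (m - i)
    · simp [hzero]
    · exact nsmul_mem (pow_mul_pow_mem_binaryForms (by omega)) _
  have hscalar : ((i + (m - i) + 1 : ℕ) : K) ≠ 0 := Nat.cast_ne_zero.2 (Nat.succ_ne_zero _)
  rw [← Submodule.smul_mem_iff _ hscalar, Nat.cast_smul_eq_nsmul, LinearMap.mulLeft_apply,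
    succ_nsmul_deriv_mul_pow_mul_pow]
  exact Submodule.add_mem_sup
    (Submodule.mem_map_of_mem (f := D.toLinearMap) (pow_mul_pow_mem_binaryForms (by omega)))
    (Submodule.mem_map_of_mem (f := LinearMap.mulLeft K _) hwronskian)

theorem map_mulLeft_deriv_right_le_sup :
    (binaryForms K x y m).map (LinearMap.mulLeft K (D y)) ≤
      (binaryForms K x y (m + 1)).map D.toLinearMap ⊔
        (binaryForms K x y (m - 1)).map (LinearMap.mulLeft K (wronskian D x y)) := by
  simpa only [mulLeft_wronskian_swap D x y, Submodule.map_neg, binaryForms_comm y x] using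
    map_mulLeft_deriv_left_le_sup D y x m

end DerivMul

section ShiftDerivation

variable {K : Type} [CommRing K]

/-- The derivation of `K{x,y}` that shifts the variables and kills the constants. Unlike a general
`D` with `IsDiffStructureP δ D` it is `K`-linear, and it agrees with `D` on monic monomials. -/
noncomputable def shiftDerivation (K : Type) [CommRing K] :
    Derivation K (DiffPolyP K) (DiffPolyP K) :=
  mkDerivation K fun v => X (v.1, v.2 + 1)

theorem shiftDerivation_X (v : PVar) : shiftDerivation K (X v) = X (v.1, v.2 + 1) :=
  mkDerivation_X K _ v

theorem commute_shiftDerivation {σ : DiffPolyP K →ₐ[K] DiffPolyP K}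
    (hσ : ∀ v, shiftDerivation K (σ (X v)) = σ (X (v.1, v.2 + 1))) :
    Commute (shiftDerivation K).toLinearMap σ.toLinearMap := by
  refine LinearMap.ext fun f => ?_
  change shiftDerivation K (σ f) = σ (shiftDerivation K f)
  induction f using MvPolynomial.induction_on with
  | C a => simp [← algebraMap_eq]
  | add p q hp hq => simp only [map_add, hp, hq]
  | mul_X p v hp =>
    simp only [map_mul, Derivation.leibniz, smul_eq_mul, map_add, hp, hσ, shiftDerivation_X]

namespace IsDiffStructureP

variable {δ : K → K} {D : DiffPolyP K → DiffPolyP K}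

theorem delta_zero (hD : IsDiffStructureP δ D) : δ 0 = 0 := by
  simpa using hD.1 0 0

theorem delta_one (hD : IsDiffStructureP δ D) : δ 1 = 0 := by
  simpa using hD.2.1 1 1

theorem apply_eq_shiftDerivation (hD : IsDiffStructureP δ D) {f : DiffPolyP K}
    (hf : f ∈ Submonoid.closure (Set.range X)) : D f = shiftDerivation K f := by
  have hδ_one := hD.delta_one
  obtain ⟨-, -, -, hmul, hC, hX⟩ := hD
  induction hf using Submonoid.closure_induction with
  | mem f hf =>
    obtain ⟨v, rfl⟩ := hf
    rw [hX, shiftDerivation_X]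
  | one => rw [← C_1, hC, hδ_one, C_0, C_1, Derivation.map_one_eq_zero]
  | mul f g _ _ hf hg =>
    rw [hmul, hf, hg, Derivation.leibniz, smul_eq_mul, smul_eq_mul]
    ring

theorem iterate_linear_form (hD : IsDiffStructureP δ D) {a c : K} (ha : δ a = 0) (hc : δ c = 0)
    (n : ℕ) : D^[n] (C a * X (0, 0) + C c * X (1, 0)) = C a * X (0, n) + C c * X (1, n) := by
  obtain ⟨_, _, hadd, hmul, hC, hX⟩ := hD
  induction n with
  | zero => rfl
  | succ n ih => simp [Function.iterate_succ_apply', ih, hadd, hmul, hC, hX, ha, hc]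

end IsDiffStructureP

end ShiftDerivation

section DifferentialPolynomials

variable {K : Type} [Field K]

theorem wronsk_eq_wronskian :
    wronsk K = wronskian (shiftDerivation K) (X (0, 0)) (X (1, 0)) := by
  simp only [wronsk, wronskian, shiftDerivation_X, zero_add]

theorem P0_eq_binaryForms (m : ℕ) : P0 K m = binaryForms K (X (0, 0)) (X (1, 0)) m := rfl

namespace IsDiffStructureP

variable {δ : K → K} {D : DiffPolyP K → DiffPolyP K} {a b c e : K}

theorem sigmaP_X_zero (hD : IsDiffStructureP δ D) (ha : δ a = 0) (hc : δ c = 0) (n : ℕ) :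
    sigmaP D a b c e (X (0, n)) = C a * X (0, n) + C c * X (1, n) := by
  simpa [sigmaP] using hD.iterate_linear_form ha hc n

theorem sigmaP_X_one (hD : IsDiffStructureP δ D) (hb : δ b = 0) (he : δ e = 0) (n : ℕ) :
    sigmaP D a b c e (X (1, n)) = C b * X (0, n) + C e * X (1, n) := by
  simpa [sigmaP] using hD.iterate_linear_form hb he n

theorem commute_shiftDerivation_sigmaP (hD : IsDiffStructureP δ D) (ha : δ a = 0) (hb : δ b = 0)
    (hc : δ c = 0) (he : δ e = 0) :
    Commute (shiftDerivation K).toLinearMap (sigmaP D a b c e).toLinearMap := by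
  refine commute_shiftDerivation fun ⟨u, n⟩ => ?_
  fin_cases u
  · simp [hD.sigmaP_X_zero ha hc, ← smul_eq_C_mul, shiftDerivation_X]
  · simp [hD.sigmaP_X_one hb he, ← smul_eq_C_mul, shiftDerivation_X]

theorem isTransvection_sigmaP_lower (hD : IsDiffStructureP δ D) :
    IsTransvection (sigmaP D 1 0 1 1) (X (0, 0)) (X (1, 0)) where
  map_left := by simp [hD.sigmaP_X_zero hD.delta_one hD.delta_one]
  map_right := by simp [hD.sigmaP_X_one hD.delta_zero hD.delta_one]

theorem isTransvection_sigmaP_upper (hD : IsDiffStructureP δ D) :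
    IsTransvection (sigmaP D 1 1 0 1) (X (1, 0)) (X (0, 0)) where
  map_left := by simp [hD.sigmaP_X_one hD.delta_one hD.delta_one, add_comm]
  map_right := by simp [hD.sigmaP_X_zero hD.delta_one hD.delta_zero]

theorem Ud_eq_sup (hD : IsDiffStructureP δ D) (d : ℕ) :
    Ud K D d = P0 K d ⊔ (P0 K d).map (shiftDerivation K).toLinearMap := by
  have hDmonomial (i : ℕ) : D (X (0, 0) ^ i * X (1, 0) ^ (d - i)) =
      shiftDerivation K (X (0, 0) ^ i * X (1, 0) ^ (d - i)) :=
    hD.apply_eq_shiftDerivation <| mul_mem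
      (pow_mem (Submonoid.subset_closure (Set.mem_range_self _)) _)
      (pow_mem (Submonoid.subset_closure (Set.mem_range_self _)) _)
  refine le_antisymm (Submodule.span_le.2 ?_) (sup_le (Submodule.span_mono ?_) ?_)
  · rintro _ ⟨i, hi, rfl | rfl⟩
    · exact Submodule.mem_sup_left (Submodule.subset_span ⟨i, hi, rfl⟩)
    · exact Submodule.mem_sup_right ⟨_, Submodule.subset_span ⟨i, hi, rfl⟩, (hDmonomial i).symm⟩
  · rintro _ ⟨i, hi, rfl⟩
    exact ⟨i, hi, .inl rfl⟩
  · refine Submodule.map_span_le _ _ _ |>.2 ?_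
    rintro _ ⟨i, hi, rfl⟩
    exact Submodule.subset_span ⟨i, hi, .inr (hDmonomial i).symm⟩

end IsDiffStructureP

theorem wdeg_eq_weight (m : PVar →₀ ℕ) : wdeg m = Finsupp.weight (fun v : PVar => v.2) m := by
  simp only [wdeg, Finsupp.weight_apply, smul_eq_mul, mul_comm]

theorem monomial_mem_P0 {m : PVar →₀ ℕ} (hm : wdeg m = 0) :
    monomial m (1 : K) ∈ P0 K m.degree := by
  have hsupp (v : PVar) (hv : v.2 ≠ 0) : m v = 0 := by
    rw [wdeg_eq_weight] at hm
    exact Nat.le_zero.1 (hm ▸ Finsupp.le_weight (fun v : PVar => v.2) hv m)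
  have hsplit : m = Finsupp.single (0, 0) (m (0, 0)) + Finsupp.single (1, 0) (m (1, 0)) := by
    ext ⟨u, n⟩
    obtain _ | n := n
    · fin_cases u <;> simp
    · simp [hsupp (u, n + 1)]
  have hmonomial : monomial m (1 : K) = X (0, 0) ^ m (0, 0) * X (1, 0) ^ m (1, 0) := by
    conv_lhs => rw [hsplit]
    simp [X_pow_eq_monomial, monomial_mul]
  have hdegree : m.degree = m (0, 0) + m (1, 0) := by
    conv_lhs => rw [hsplit]
    simp
  rw [hmonomial, hdegree]
  exact pow_mul_pow_mem_binaryForms rfl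

theorem exists_eq_add_single_of_wdeg_eq_one {m : PVar →₀ ℕ} (hm : wdeg m = 1) :
    ∃ (u : Fin 2) (m₀ : PVar →₀ ℕ), wdeg m₀ = 0 ∧ m = m₀ + Finsupp.single (u, 1) 1 := by
  obtain ⟨⟨u, n⟩, hv, hne⟩ := Finset.exists_ne_zero_of_sum_ne_zero (hm.trans_ne one_ne_zero)
  have hmv : m (u, n) ≠ 0 := Finsupp.mem_support_iff.1 hv
  have hn₀ : n ≠ 0 := left_ne_zero_of_mul hne
  have hweight := Finsupp.weight_sub_single_add (w := fun v : PVar => v.2) hmv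
  rw [← wdeg_eq_weight, ← wdeg_eq_weight, hm] at hweight
  obtain rfl : n = 1 := by omega
  exact ⟨u, m - Finsupp.single (u, 1) 1, by omega, (Finsupp.sub_add_single_one_cancel hmv).symm⟩

theorem P1_le_sup [CharZero K] (d : ℕ) :
    P1 K d ≤ P0 K d ⊔ ((P0 K d).map (shiftDerivation K).toLinearMap ⊔
      (P0 K (d - 2)).map (LinearMap.mulLeft K (wronsk K))) := by
  refine Submodule.span_le.2 ?_
  rintro _ ⟨m, hdeg : m.degree = d, hwt, rfl⟩
  obtain hwt₀ | hwt₁ := Nat.le_one_iff_eq_zero_or_eq_one.1 hwt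
  · exact Submodule.mem_sup_left (hdeg ▸ monomial_mem_P0 hwt₀)
  · refine Submodule.mem_sup_right ?_
    obtain ⟨u, m₀, hm₀, rfl⟩ := exists_eq_add_single_of_wdeg_eq_one hwt₁
    have hd : d = m₀.degree + 1 := by rw [← hdeg, map_add, Finsupp.degree_single]
    have hmonomial : monomial (m₀ + Finsupp.single (u, 1) 1) (1 : K) =
        shiftDerivation K (X (u, 0)) * monomial m₀ 1 := by
      rw [shiftDerivation_X, X, monomial_mul, add_comm, one_mul]
    rw [hmonomial, hd, wronsk_eq_wronskian]
    fin_cases u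
    · exact map_mulLeft_deriv_left_le_sup _ _ _ _ ⟨_, monomial_mem_P0 hm₀, rfl⟩
    · exact map_mulLeft_deriv_right_le_sup _ _ _ _ ⟨_, monomial_mem_P0 hm₀, rfl⟩

end DifferentialPolynomials

theorem submodule_between_P0_P1_classification_general {K : Type} [Field K] [CharZero K]
    (δ : K → K) (D : DiffPolyP K → DiffPolyP K) (hD : IsDiffStructureP δ D)
    (d : ℕ) (hd : 2 ≤ d) (V : Submodule K (DiffPolyP K))
    (hV₀ : P0 K d ≤ V) (hV₁ : V ≤ P1 K d)
    (hVupper : ∀ f ∈ V, sigmaP D 1 1 0 1 f ∈ V) (hVlower : ∀ f ∈ V, sigmaP D 1 0 1 1 f ∈ V) :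
    V = P0 K d ∨ V = Ud K D d ∨ V = Wd K d ∨ V = P1 K d := by
  have hlower := hD.isTransvection_sigmaP_lower
  have hupper := hD.isTransvection_sigmaP_upper
  have hDlower := hD.commute_shiftDerivation_sigmaP hD.delta_one hD.delta_zero hD.delta_one
    hD.delta_one
  have hDupper := hD.commute_shiftDerivation_sigmaP hD.delta_one hD.delta_one hD.delta_zero
    hD.delta_one
  have hcases := hlower.eq_or_eq_sup_of_le_sup_map_binaryForms hupper hVlower hVupper
    hDlower hDupper (hlower.commute_mulLeft_wronskian hDlower)
    (hupper.commute_mulLeft_wronskian_swap hDupper)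
    (pow_ne_zero d (X_ne_zero _)) (show d - 2 < d by omega) hV₀
    (hV₁.trans (wronsk_eq_wronskian (K := K) ▸ P1_le_sup d))
  rw [← wronsk_eq_wronskian, ← P0_eq_binaryForms, ← P0_eq_binaryForms] at hcases
  rw [hD.Ud_eq_sup, Wd]
  exact hcases.imp_right <| .imp_right <| .imp_right fun hV =>
    le_antisymm hV₁ ((P1_le_sup d).trans_eq hV.symm)

/-- If `d ≥ 2` and `V` is a `K`-subspace of `P` with `P_d^0 ⊆ V ⊆ P_d^1` that
is stable under `σ_g` for every `g ∈ SL₂(K)`, then `V` is one of `P_d^0`, `U_d`, `W_d`,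
`P_d^1`. -/
theorem submodule_between_P0_P1_classification {K : Type} [Field K] [CharZero K]
    (δ : K → K) (D : DiffPolyP K → DiffPolyP K)
    (hD : IsDiffStructureP δ D)
    (d : ℕ) (hd : 2 ≤ d)
    (V : Submodule K (DiffPolyP K))
    (hV₀ : P0 K d ≤ V) (hV₁ : V ≤ P1 K d)
    (hVstable : ∀ a b c e : K, a * e - b * c = 1 →
      ∀ f ∈ V, sigmaP D a b c e f ∈ V) :
    V = P0 K d ∨ V = Ud K D d ∨ V = Wd K d ∨ V = P1 K d :=
  submodule_between_P0_P1_classification_general δ D hD d hd V hV₀ hV₁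
    (hVstable 1 1 0 1 (by ring)) (hVstable 1 0 1 1 (by ring))
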